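/- The set function S ↦ log det(I + ρ·H_Sᴴ·H_S), defined on subsets S of the rows of a complex N_T×N_R matrix H (with ρ ≥ 0), is submodular: for all sets S ⊆ T and any row index i ∉ T, f(S ∪ {i}) − f(S) ≥ f(T ∪ {i}) − f(T). -/

import Mathlib

open Matrix

/-!
Write `A ≤ B` for the Loewner order. If `A` is positive definite and `P = Cᴴ C`, the
matrix determinant lemma gives `det (A + P) = det A · det (1 + C A⁻¹ Cᴴ)`. Since inversion reverses
the Loewner order and `det` is monotone for it, the growth factor `det (A + P) / det A` can only
decrease as `A` grows. Adding a row `h` to the selection adds `P = ρ hᴴ h` to `1 + ρ H_Sᴴ H_S`, and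
the latter matrix is monotone in `S`.
-/

section LoewnerOrder

open scoped ComplexOrder MatrixOrder

variable {𝕜 n : Type*} [RCLike 𝕜] {A B P : Matrix n n 𝕜}

theorem posDef_of_le (hA : A.PosDef) (hAB : A ≤ B) : B.PosDef := by
  simpa using hA.add_posSemidef (le_iff.1 hAB)

variable [Fintype n] [DecidableEq n]

theorem inv_le_inv_of_posDef (hA : A.PosDef) (hAB : A ≤ B) : B⁻¹ ≤ A⁻¹ := by
  have hB := posDef_of_le hA hAB
  have := hA.inv.isUnit.invertible
  have := hB.isUnit.invertible
  have hA_inv_inv : A⁻¹⁻¹ = A := nonsing_inv_nonsing_inv A hA.det_pos.ne'.isUnit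
  -- Both `A ≤ B` and `B⁻¹ ≤ A⁻¹` say that the block matrix `[A⁻¹, 1; 1, B]` is positive.
  have hblock : (fromBlocks A⁻¹ 1 1ᴴ B).PosSemidef :=
    (PosDef.fromBlocks₁₁ 1 B hA.inv).2 (by simpa [hA_inv_inv] using le_iff.1 hAB)
  simpa [le_iff] using (PosDef.fromBlocks₂₂ A⁻¹ 1 hB).1 hblock

theorem one_le_det_one_add (hP : 0 ≤ P) : 1 ≤ (1 + P).det := by
  have hP_psd := nonneg_iff_posSemidef.1 hP
  set U := hP_psd.isHermitian.eigenvectorUnitary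
  set D : Matrix n n 𝕜 := diagonal (RCLike.ofReal ∘ hP_psd.isHermitian.eigenvalues) with hD
  have hspec : P = U * (D * star (U : Matrix n n 𝕜)) := by
    simpa [Unitary.conjStarAlgAut_apply, mul_assoc] using hP_psd.isHermitian.spectral_theorem
  calc (1 : 𝕜) ≤ ∏ i, (1 + (hP_psd.isHermitian.eigenvalues i : 𝕜)) :=
        Finset.one_le_prod fun i _ =>
          le_add_of_nonneg_right (by exact_mod_cast hP_psd.eigenvalues_nonneg i)
    _ = (1 + D).det := by simp [hD, ← diagonal_one, diagonal_add]
    _ = (1 + P).det := by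
        rw [hspec, det_one_add_mul_comm, mul_assoc, Unitary.coe_star_mul_self, mul_one]

theorem det_le_det_of_posDef (hA : A.PosDef) (hAB : A ≤ B) : A.det ≤ B.det := by
  obtain ⟨C, hC⟩ := CStarAlgebra.nonneg_iff_eq_star_mul_self.1 (sub_nonneg.2 hAB)
  have hCA : 0 ≤ C * A⁻¹ * Cᴴ := star_right_conjugate_nonneg hA.inv.posSemidef.nonneg C
  calc A.det ≤ A.det * (1 + C * A⁻¹ * Cᴴ).det :=
        le_mul_of_one_le_right hA.det_pos.le (one_le_det_one_add hCA)
    _ = (A + Cᴴ * C).det := (det_add_mul Cᴴ C hA.det_pos.ne'.isUnit).symm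
    _ = B.det := by rw [← star_eq_conjTranspose, ← hC, add_sub_cancel]

theorem det_add_mul_det_le_det_add_mul_det (hA : A.PosDef) (hAB : A ≤ B) (hP : 0 ≤ P) :
    (B + P).det * A.det ≤ (A + P).det * B.det := by
  have hB := posDef_of_le hA hAB
  obtain ⟨C, rfl⟩ := CStarAlgebra.nonneg_iff_eq_star_mul_self.1 hP
  have hCB : 0 ≤ C * B⁻¹ * Cᴴ := star_right_conjugate_nonneg hB.inv.posSemidef.nonneg C
  have hCBA : C * B⁻¹ * Cᴴ ≤ C * A⁻¹ * Cᴴ :=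
    star_right_conjugate_le_conjugate (inv_le_inv_of_posDef hA hAB) C
  have hdet : (1 + C * B⁻¹ * Cᴴ).det ≤ (1 + C * A⁻¹ * Cᴴ).det :=
    det_le_det_of_posDef (PosDef.one.add_posSemidef hCB.posSemidef) (add_le_add_right hCBA 1)
  calc (B + Cᴴ * C).det * A.det = A.det * B.det * (1 + C * B⁻¹ * Cᴴ).det := by
        rw [det_add_mul Cᴴ C hB.det_pos.ne'.isUnit]; ring
    _ ≤ A.det * B.det * (1 + C * A⁻¹ * Cᴴ).det :=
        mul_le_mul_of_nonneg_left hdet (mul_pos hA.det_pos hB.det_pos).le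
    _ = (A + Cᴴ * C).det * B.det := by
        rw [det_add_mul Cᴴ C hA.det_pos.ne'.isUnit]; ring

/-- The log-determinant `log det A`, as a real number. It is meant for positive definite `A`,
whose determinant is real and positive, so that taking the real part loses nothing. -/
noncomputable def logDet (A : Matrix n n 𝕜) : ℝ :=
  Real.log (RCLike.re A.det)

theorem logDet_mul (hA : A.PosDef) (hB : B.PosDef) : logDet (A * B) = logDet A + logDet B := by
  obtain ⟨hA_re, hA_im⟩ := RCLike.pos_iff.1 hA.det_pos
  obtain ⟨hB_re, -⟩ := RCLike.pos_iff.1 hB.det_pos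
  rw [logDet, logDet, logDet, det_mul, RCLike.mul_re, hA_im, zero_mul, sub_zero,
    Real.log_mul hA_re.ne' hB_re.ne']

theorem logDet_add_sub_logDet_le (hA : A.PosDef) (hAB : A ≤ B) (hP : 0 ≤ P) :
    logDet (B + P) - logDet B ≤ logDet (A + P) - logDet A := by
  have hB := posDef_of_le hA hAB
  have hAP := hA.add_posSemidef hP.posSemidef
  have hBP := hB.add_posSemidef hP.posSemidef
  rw [sub_le_sub_iff, ← logDet_mul hBP hA, ← logDet_mul hAP hB, logDet, logDet, det_mul, det_mul]
  exact Real.log_le_log (RCLike.pos_iff.1 (mul_pos hBP.det_pos hA.det_pos)).1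
    (RCLike.le_iff_re_im.1 (det_add_mul_det_le_det_add_mul_det hA hAB hP)).1

theorem logDet_add_sum_insert_sub_le {ι : Type*} [DecidableEq ι] (hA : A.PosDef)
    {P : ι → Matrix n n 𝕜} (hP : ∀ i, 0 ≤ P i) {S T : Finset ι} (hST : S ⊆ T) {i : ι}
    (hi : i ∉ T) :
    logDet (A + ∑ j ∈ insert i T, P j) - logDet (A + ∑ j ∈ T, P j) ≤
      logDet (A + ∑ j ∈ insert i S, P j) - logDet (A + ∑ j ∈ S, P j) := by
  have hS_posDef : (A + ∑ j ∈ S, P j).PosDef :=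
    hA.add_posSemidef (Finset.sum_nonneg fun j _ => hP j).posSemidef
  have hS_le_T : A + ∑ j ∈ S, P j ≤ A + ∑ j ∈ T, P j :=
    add_le_add_right (Finset.sum_le_sum_of_subset_of_nonneg hST fun j _ _ => hP j) A
  simp only [Finset.sum_insert hi, Finset.sum_insert (Finset.notMem_mono hST hi),
    add_comm (P i), ← add_assoc]
  exact logDet_add_sub_logDet_le hS_posDef hS_le_T (hP i)

end LoewnerOrder

theorem conjTranspose_mul_self_submatrix_eq_sum {m n R : Type*} [NonUnitalNonAssocSemiring R]
    [StarRing R] (H : Matrix m n R) (S : Finset m) :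
    (H.submatrix (Subtype.val : {i // i ∈ S} → m) id)ᴴ *
        H.submatrix (Subtype.val : {i // i ∈ S} → m) id =
      ∑ i ∈ S, vecMulVec (star (H i)) (H i) := by
  ext a b
  simp only [mul_apply, Matrix.sum_apply, conjTranspose_apply, submatrix_apply, vecMulVec_apply,
    Pi.star_apply, id]
  exact Finset.sum_coe_sort S fun i => star (H i a) * H i b

/-- The sum capacity `log det (1 + ρ H_Sᴴ H_S)` of the MIMO channel whose transmit antennas
are the rows of `H` indexed by `S`, for a power factor `ρ` that does not depend on `S`. -/
noncomputable def sumCapacity {𝕜 m n : Type*} [RCLike 𝕜] [Fintype n] [DecidableEq n]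
    (H : Matrix m n 𝕜) (ρ : ℝ) (S : Finset m) : ℝ :=
  logDet (1 + (ρ : 𝕜) •
    ((H.submatrix (Subtype.val : {i // i ∈ S} → m) id)ᴴ *
      H.submatrix (Subtype.val : {i // i ∈ S} → m) id))

open scoped ComplexOrder MatrixOrder in
theorem logdet_capacity_submodular_general {𝕜 m n : Type*} [RCLike 𝕜] [DecidableEq m] [Fintype n]
    [DecidableEq n] (H : Matrix m n 𝕜) {ρ : ℝ} (hρ : 0 ≤ ρ) {S T : Finset m} (hST : S ⊆ T) {i : m}
    (hi : i ∉ T) :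
    sumCapacity H ρ (insert i T) - sumCapacity H ρ T ≤
      sumCapacity H ρ (insert i S) - sumCapacity H ρ S := by
  have hrow_nonneg (j : m) : 0 ≤ (ρ : 𝕜) • vecMulVec (star (H j)) (H j) :=
    smul_nonneg (by exact_mod_cast hρ) (posSemidef_vecMulVec_star_self (H j)).nonneg
  simp only [sumCapacity, conjTranspose_mul_self_submatrix_eq_sum, Finset.smul_sum]
  exact logDet_add_sum_insert_sub_le .one hrow_nonneg hST hi

/-- The set function `S ↦ log det (I + ρ·H_Sᴴ·H_S)` on subsets of rows of `H`
is submodular: for `S ⊆ T` and `i ∉ T`,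
`f(S ∪ {i}) − f(S) ≥ f(T ∪ {i}) − f(T)`. -/
theorem logdet_capacity_submodular (N r : ℕ)
    (H : Matrix (Fin N) (Fin r) ℂ) (ρ : ℝ) (hρ : 0 ≤ ρ)
    (f : Finset (Fin N) → ℝ)
    (hf : ∀ S : Finset (Fin N),
      f S = Real.log
        ((1 + (ρ : ℂ) •
            ((H.submatrix (Subtype.val : {i // i ∈ S} → Fin N) id)ᴴ *
              (H.submatrix (Subtype.val : {i // i ∈ S} → Fin N) id))).det.re)) :
    ∀ S T : Finset (Fin N), S ⊆ T → ∀ i : Fin N, i ∉ T →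
      f (insert i T) - f T ≤ f (insert i S) - f S := by
  obtain rfl : f = sumCapacity H ρ := funext hf
  exact fun S T hST i hi => logdet_capacity_submodular_general H hρ hST hi
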